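/- Let P⁺ be a poset of type (b) with parameters m ≥ 3, n, n′ ≥ 0 and 1 ≤ i₁ < ⋯ < i_p ≤ m−1, set P = P⁺ ∖ {∞}, let k be a field and let R be the Hibi ring, i.e. the k-linear span inside k[T_x : x ∈ P] of the monomials T^ν = ∏_{x∈P} T_x^{ν(x)} with ν ∈ \overline{T}(P) (restricted to P). Let R′ be the k-linear span of {T^ν : ν ∈ \overline{T}(P), ν(z′₁) = ν(z_m)}. Then: (1) R′ is a k-subalgebra of R isomorphic as a k-algebra to a polynomial ring over k in #P − 1 variables; and (2) for each 1 ≤ h ≤ m−2, the k-linear span of {T^ν : ν ∈ T(P), ν(z′₁) − ν(z_m) = h} is a free R′-module of rank 1 generated by T^{ν_h}, where ν_h(x) = rank[x,∞] for x ∈ [z′₁,∞] ∖ {z_m} and ν_h(x) = rank[x,∞] + m − 1 − h otherwise. -/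

import Mathlib

/-- The rank of the interval `[x,y]`: the maximum length of a chain from `x` to `y`. -/
noncomputable def intervalRank {Q : Type*} [PartialOrder Q] (x y : Q) : ℕ :=
  sSup {n : ℕ | ∃ c : Fin (n + 1) → Q, StrictMono c ∧ c 0 = x ∧ c (Fin.last n) = y}

/-- The covering relations of a poset of type (b) with parameters
`m ≥ 3`, `n, n' ≥ 0` and `1 ≤ ι 0 < ⋯ < ι (p-1) ≤ m − 1` (1-based indices `i_j = ι j`). -/
def TypeBCovers {Q : Type*} (m n n' p : ℕ) (hm : 3 ≤ m)
    (z z' : Fin m → Q) (w : Fin (n + 1) → Q) (w' : Fin (n' + 1) → Q)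
    (ι : Fin p → ℕ) (a b : Q) : Prop :=
  (∃ i : Fin n, a = w i.castSucc ∧ b = w i.succ) ∨
  (∃ i : Fin n', a = w' i.castSucc ∧ b = w' i.succ) ∨
  (a = w (Fin.last n) ∧ b = z ⟨0, by omega⟩) ∨
  (a = w (Fin.last n) ∧ b = z' ⟨0, by omega⟩) ∨
  (∃ (i : ℕ) (h : i + 1 < m), a = z ⟨i, by omega⟩ ∧ b = z ⟨i + 1, h⟩) ∨
  (∃ (i : ℕ) (h : i + 1 < m), a = z' ⟨i, by omega⟩ ∧ b = z' ⟨i + 1, h⟩) ∨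
  (a = z ⟨m - 1, by omega⟩ ∧ b = w' 0) ∨
  (a = z' ⟨m - 1, by omega⟩ ∧ b = w' 0) ∨
  (a = z' ⟨0, by omega⟩ ∧ b = z ⟨m - 1, by omega⟩) ∨
  (∃ (j : Fin p) (a' b' : Fin m),
    (a' : ℕ) + 1 = ι j ∧ (b' : ℕ) = ι j ∧ a = z a' ∧ b = z' b')

/-- `ν ∈ T(P)` where `inf` plays the role of `∞` (the maximum of `P⁺`). -/
def IsTPAt {Q : Type*} [PartialOrder Q] (inf : Q) (ν : Q → ℕ) : Prop :=
  ν inf = 0 ∧ StrictAnti ν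

/-- `ν ∈ \overline{T}(P)` where `inf` plays the role of `∞`. -/
def IsTbarAt {Q : Type*} [PartialOrder Q] (inf : Q) (ν : Q → ℕ) : Prop :=
  ν inf = 0 ∧ Antitone ν

/-- The function `ν_h`: `ν_h(x) = rank[x,∞]` for `x ∈ [z'₁,∞] ∖ {z_m}` and
`ν_h(x) = rank[x,∞] + m − 1 − h` otherwise. -/
noncomputable def nuH {Q : Type*} [PartialOrder Q] [DecidableEq Q]
    [DecidableRel ((· ≤ ·) : Q → Q → Prop)]
    (m n' h : ℕ) (hm : 3 ≤ m) (z z' : Fin m → Q) (w' : Fin (n' + 1) → Q) : Q → ℕ :=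
  fun q =>
    if z' ⟨0, by omega⟩ ≤ q ∧ q ≠ z ⟨m - 1, by omega⟩ then
      intervalRank q (w' (Fin.last n'))
    else
      intervalRank q (w' (Fin.last n')) + (m - 1 - h)

/-- The monomial `T^ν = ∏_{x ∈ P} T_x^{ν(x)}` in `k[T_x : x ∈ P]`, where
`P = P⁺ ∖ {∞}` and `inf = ∞`. -/
noncomputable def hibiMonomial {Q : Type*} [Fintype Q] [DecidableEq Q]
    (k : Type*) [Field k] (inf : Q) (ν : Q → ℕ) :
    MvPolynomial {q : Q // q ≠ inf} k :=
  ∏ x : {q : Q // q ≠ inf}, (MvPolynomial.X x : MvPolynomial {q : Q // q ≠ inf} k) ^ ν x.1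

/-!
Identifying `z'₁` with `z_m` turns `P⁺` into the chain
`w₀ < ⋯ < w_n < z₁ < ⋯ < z_m = z'₁ < ⋯ < z'_m < w'₀ < ⋯ < w'_{n'}`. The `ν ∈ \overline{T}(P)` with
`ν(z'₁) = ν(z_m)` are therefore the antitone functions on a chain that vanish at its top, and these
form a free commutative monoid, a function being determined by its arbitrary successive drops. Hence
`R'` is a polynomial ring.

Every covering relation of the chain comes from one of `P⁺`, along which each `ν ∈ T(P)` drops by at
least one and `ν_h` by exactly one. If moreover `ν` and `ν_h` have the same gap between `z'₁` and
`z_m`, then `ν - ν_h` factors through the chain and is antitone and nonnegative there, so that `T^ν`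
is `T^{ν_h}` times a monomial of `R'`.
-/

section Monomials

variable {k σ τ : Type*}

theorem exists_subalgebra_span_monomial_range [CommSemiring k] {g : (τ →₀ ℕ) →+ (σ →₀ ℕ)}
    (hg : Function.Injective g) :
    ∃ A : Subalgebra k (MvPolynomial σ k),
      Subalgebra.toSubmodule A =
        Submodule.span k (Set.range fun d => MvPolynomial.monomial (g d) (1 : k)) ∧
      Nonempty (A ≃ₐ[k] MvPolynomial τ k) := by
  let φ : MvPolynomial τ k →ₐ[k] MvPolynomial σ k := AddMonoidAlgebra.mapDomainAlgHom k k g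
  have φ_injective : Function.Injective φ := AddMonoidAlgebra.mapDomain_injective hg
  have φ_monomial (d) : φ (MvPolynomial.monomial d 1) = MvPolynomial.monomial (g d) 1 :=
    AddMonoidAlgebra.mapDomain_single
  refine ⟨φ.range, ?_, ⟨(AlgEquiv.ofInjective φ φ_injective).symm⟩⟩
  calc Subalgebra.toSubmodule φ.range
      = Submodule.map φ.toLinearMap ⊤ := by ext; simp
    _ = Submodule.span k (φ '' Set.range (MvPolynomial.basisMonomials τ k)) := by
        rw [← (MvPolynomial.basisMonomials τ k).span_eq, Submodule.map_span]; rfl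
    _ = _ := by simp only [← Set.range_comp, Function.comp_def, MvPolynomial.coe_basisMonomials,
        φ_monomial]

variable {Q : Type*} [Fintype Q] [DecidableEq Q] [Field k] {t : Q}

theorem hibiMonomial_eq_monomial (ν : Q → ℕ) :
    hibiMonomial k t ν =
      MvPolynomial.monomial (Finsupp.equivFunOnFinite.symm fun x : {q // q ≠ t} => ν x) 1 := by
  rw [MvPolynomial.monomial_eq, Finsupp.prod_fintype _ _ fun _ => pow_zero _]
  simp [hibiMonomial]

theorem hibiMonomial_add (μ ν : Q → ℕ) :
    hibiMonomial k t (μ + ν) = hibiMonomial k t μ * hibiMonomial k t ν := by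
  simp [hibiMonomial, pow_add, Finset.prod_mul_distrib]

theorem hibiMonomial_ne_zero (ν : Q → ℕ) : hibiMonomial k t ν ≠ 0 := by
  simp [hibiMonomial_eq_monomial]

theorem exists_subalgebra_span_hibiMonomial_range {g : (τ →₀ ℕ) →+ (Q → ℕ)}
    (hg : Function.Injective g) (hgt : ∀ d, g d t = 0) :
    ∃ A : Subalgebra k (MvPolynomial {q // q ≠ t} k),
      Subalgebra.toSubmodule A =
        Submodule.span k (Set.range fun d => hibiMonomial k t (g d)) ∧
      Nonempty (A ≃ₐ[k] MvPolynomial τ k) := by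
  let exponent : (τ →₀ ℕ) →+ ({q // q ≠ t} →₀ ℕ) :=
    { toFun d := Finsupp.equivFunOnFinite.symm fun x => g d x
      map_zero' := by ext; simp
      map_add' d e := by ext; simp }
  have exponent_injective : Function.Injective exponent := fun d e hde => hg <| funext fun q => by
    by_cases hq : q = t
    · rw [hq, hgt, hgt]
    · exact DFunLike.congr_fun hde ⟨q, hq⟩
  have monomial_exponent (d) :
      MvPolynomial.monomial (exponent d) (1 : k) = hibiMonomial k t (g d) :=
    (hibiMonomial_eq_monomial _).symm
  simpa only [monomial_exponent] using
    exists_subalgebra_span_monomial_range (k := k) exponent_injective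

end Monomials

section TailSum

variable {N : ℕ}

/-- The tail sums `j ↦ ∑_{i ≥ j} d i` of a finite sequence of length `N`; the entry at
`Fin.last N` is the empty sum. They parametrize the antitone functions on the chain
`Fin (N + 1)` vanishing at the top. -/
def tailSum (N : ℕ) : (Fin N →₀ ℕ) →+ (Fin (N + 1) → ℕ) where
  toFun d j := ∑ i with j ≤ Fin.castSucc i, d i
  map_zero' := by ext; simp
  map_add' d e := by ext; simp [Finset.sum_add_distrib]

@[simp]
theorem tailSum_last (d : Fin N →₀ ℕ) : tailSum N d (Fin.last N) = 0 := by
  simp [tailSum]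

theorem tailSum_castSucc (d : Fin N →₀ ℕ) (i : Fin N) :
    tailSum N d i.castSucc = d i + tailSum N d i.succ := by
  simp [tailSum, Finset.filter_le_eq_Ici, Finset.filter_lt_eq_Ioi, add_comm (d i),
    Finset.sum_Ioi_add_eq_sum_Ici]

theorem tailSum_injective : Function.Injective (tailSum N) := fun d e hde => by
  ext i
  have := tailSum_castSucc d i
  rw [hde, tailSum_castSucc e] at this
  omega

theorem range_tailSum :
    Set.range (tailSum N) = {c | Antitone c ∧ c (Fin.last N) = 0} := by
  ext c
  constructor
  · rintro ⟨d, rfl⟩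
    exact ⟨Fin.antitone_iff_succ_le.2 fun i => by simp [tailSum_castSucc], tailSum_last d⟩
  · rintro ⟨hc, hlast⟩
    refine ⟨Finsupp.equivFunOnFinite.symm fun i => c i.castSucc - c i.succ, funext fun j => ?_⟩
    induction j using Fin.reverseInduction with
    | last => rw [tailSum_last, hlast]
    | cast i ih =>
      rw [tailSum_castSucc, ih, Finsupp.equivFunOnFinite_symm_apply_apply]
      exact Nat.sub_add_cancel (hc i.castSucc_lt_succ.le)

end TailSum

section ChainCollapse

/-- The span of the monomials `T^ν` with `ν ∈ \overline{T}(P)` and `ν a = ν b`, where `t` plays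
the role of `∞`: the algebra `R'` for `a = z'₁` and `b = z_m`. -/
noncomputable def equalSpan {Q : Type*} [PartialOrder Q] [Fintype Q] [DecidableEq Q]
    (k : Type*) [Field k] (t a b : Q) : Submodule k (MvPolynomial {q // q ≠ t} k) :=
  Submodule.span k {f | ∃ ν : Q → ℕ, IsTbarAt t ν ∧ ν a = ν b ∧ f = hibiMonomial k t ν}

/-- The span of the monomials `T^ν` with `ν ∈ T(P)` and `ν a - ν b = h`, where `t` plays
the role of `∞`. -/
noncomputable def gapSpan {Q : Type*} [PartialOrder Q] [Fintype Q] [DecidableEq Q]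
    (k : Type*) [Field k] (t a b : Q) (h : ℤ) : Submodule k (MvPolynomial {q // q ≠ t} k) :=
  Submodule.span k {f | ∃ ν : Q → ℕ, IsTPAt t ν ∧ (ν a : ℤ) - ν b = h ∧ f = hibiMonomial k t ν}

variable {Q : Type*} [PartialOrder Q]

/-- The map `π` presents the chain `0 < ⋯ < N` as the quotient of a poset with maximum `t` by the
identification of `a` with `b`: its fibres are the classes of this identification, and every
covering relation of the chain is the image of one of the poset. -/
structure IsChainCollapse {N : ℕ} (π : Q → Fin (N + 1)) (t a b : Q) : Prop where
  monotone : Monotone π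
  apply_top : π t = Fin.last N
  apply_eq_iff (x y : Q) : π x = π y ↔ x = y ∨ x = a ∧ y = b ∨ x = b ∧ y = a
  exists_covBy (i : Fin N) : ∃ x y, x ⋖ y ∧ π x = i.castSucc ∧ π y = i.succ

namespace IsChainCollapse

variable {N : ℕ} {π : Q → Fin (N + 1)} {t a b : Q}

theorem apply_eq (H : IsChainCollapse π t a b) : π a = π b :=
  (H.apply_eq_iff a b).2 (.inr (.inl ⟨rfl, rfl⟩))

theorem surjective (H : IsChainCollapse π t a b) : Function.Surjective π := fun j => by
  induction j using Fin.lastCases with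
  | last => exact ⟨t, H.apply_top⟩
  | cast i =>
    obtain ⟨x, -, -, hx, -⟩ := H.exists_covBy i
    exact ⟨x, hx⟩

theorem exists_comp_eq (H : IsChainCollapse π t a b) {α : Type*} {f : Q → α} (hab : f a = f b) :
    ∃ c : Fin (N + 1) → α, c ∘ π = f := by
  refine ⟨f ∘ Function.surjInv H.surjective, funext fun x => ?_⟩
  have π_surjInv := Function.surjInv_eq H.surjective (π x)
  rcases (H.apply_eq_iff _ _).1 π_surjInv with h | ⟨h, rfl⟩ | ⟨h, rfl⟩
  all_goals simp [h, hab]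

theorem exists_antitone_comp_eq (H : IsChainCollapse π t a b) {α : Type*} [Preorder α] {f : Q → α}
    (hab : f a = f b) (hf : ∀ x y, x ⋖ y → (π y : ℕ) = π x + 1 → f y ≤ f x) :
    ∃ c : Fin (N + 1) → α, Antitone c ∧ c ∘ π = f := by
  obtain ⟨c, rfl⟩ := H.exists_comp_eq hab
  refine ⟨c, Fin.antitone_iff_succ_le.2 fun i => ?_, rfl⟩
  obtain ⟨x, y, hxy, hx, hy⟩ := H.exists_covBy i
  simpa [hx, hy] using hf x y hxy (by simp [hx, hy])

theorem isTbarAt_and_apply_eq_iff (H : IsChainCollapse π t a b) {ν : Q → ℕ} :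
    IsTbarAt t ν ∧ ν a = ν b ↔ ∃ d, tailSum N d ∘ π = ν := by
  have : (∃ d, tailSum N d ∘ π = ν) ↔ ∃ c ∈ Set.range (tailSum N), c ∘ π = ν := by simp
  rw [this, range_tailSum]
  constructor
  · rintro ⟨⟨hνt, hν⟩, hab⟩
    obtain ⟨c, hc, rfl⟩ := H.exists_antitone_comp_eq hab fun x y hxy _ => hν hxy.le
    exact ⟨c, ⟨hc, by simpa [H.apply_top] using hνt⟩, rfl⟩
  · rintro ⟨c, ⟨hc, hlast⟩, rfl⟩
    exact ⟨⟨by simp [H.apply_top, hlast], hc.comp_monotone H.monotone⟩, congrArg c H.apply_eq⟩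

/-- The difference `ν - ρ` factors through the chain, where it drops along every cover: `ν` drops by
at least one and `ρ` by at most one. -/
theorem exists_eq_add (H : IsChainCollapse π t a b) {ν ρ : Q → ℕ} (hν : IsTPAt t ν) (hρt : ρ t = 0)
    (hρ : ∀ x y, x ⋖ y → (π y : ℕ) = π x + 1 → ρ x ≤ ρ y + 1)
    (hab : (ν a : ℤ) - ν b = ρ a - ρ b) :
    ∃ μ : Q → ℕ, IsTbarAt t μ ∧ μ a = μ b ∧ ν = ρ + μ := by
  obtain ⟨c, hc, hcπ⟩ := H.exists_antitone_comp_eq (f := fun x => (ν x : ℤ) - ρ x)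
    (by omega)
    fun x y hxy hπ => by
      have := hν.2 hxy.lt
      have := hρ x y hxy hπ
      omega
  replace hcπ (x) : c (π x) = ν x - ρ x := congrFun hcπ x
  have c_last : c (Fin.last N) = 0 := by simp [← H.apply_top, hcπ, hν.1, hρt]
  have le (x) : ρ x ≤ ν x := by
    have := hc (Fin.le_last (π x))
    rw [hcπ, c_last] at this
    omega
  refine ⟨ν - ρ, ⟨by simp [hν.1], fun x y hxy => ?_⟩, ?_, (add_tsub_cancel_of_le le).symm⟩
  · have := hc (H.monotone hxy)
    simp only [hcπ, Pi.sub_apply] at this ⊢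
    omega
  · simp only [Pi.sub_apply]
    omega

variable [Fintype Q] [DecidableEq Q] (k : Type*) [Field k]

theorem exists_subalgebra_equalSpan (H : IsChainCollapse π t a b) :
    ∃ A : Subalgebra k (MvPolynomial {q // q ≠ t} k),
      Subalgebra.toSubmodule A = equalSpan k t a b ∧
      Nonempty (A ≃ₐ[k] MvPolynomial (Fin N) k) := by
  let pullback : (Fin N →₀ ℕ) →+ (Q → ℕ) :=
    (LinearMap.funLeft ℕ ℕ π).toAddMonoidHom.comp (tailSum N)
  have pullback_injective : Function.Injective pullback :=
    (LinearMap.funLeft_injective_of_surjective ℕ ℕ π H.surjective).comp tailSum_injective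
  have pullback_top (d) : pullback d t = 0 :=
    (congrArg (tailSum N d) H.apply_top).trans (tailSum_last d)
  obtain ⟨A, hA, hiso⟩ := exists_subalgebra_span_hibiMonomial_range (k := k) pullback_injective
    pullback_top
  refine ⟨A, hA.trans (congrArg _ (Set.ext fun f => ?_)), hiso⟩
  simp only [← and_assoc, Set.mem_ofPred_eq, H.isTbarAt_and_apply_eq_iff]
  exact ⟨fun ⟨d, hd⟩ => ⟨_, ⟨d, rfl⟩, hd.symm⟩,
    fun ⟨_, ⟨d, hd⟩, hf⟩ => ⟨d, by rw [hf, ← hd]; rfl⟩⟩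

theorem gapSpan_eq_map_mulLeft (H : IsChainCollapse π t a b) {ρ : Q → ℕ} (hρ : IsTPAt t ρ)
    (hρ_le : ∀ x y, x ⋖ y → (π y : ℕ) = π x + 1 → ρ x ≤ ρ y + 1) :
    gapSpan k t a b (ρ a - ρ b) =
      (equalSpan k t a b).map (LinearMap.mulLeft k (hibiMonomial k t ρ)) := by
  rw [equalSpan, Submodule.map_span]
  refine congrArg _ (Set.Subset.antisymm ?_ ?_)
  · rintro _ ⟨ν, hν, hgap, rfl⟩
    obtain ⟨μ, hμ, hab, rfl⟩ := H.exists_eq_add hν hρ.1 hρ_le hgap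
    exact ⟨_, ⟨μ, hμ, hab, rfl⟩, (hibiMonomial_add ρ μ).symm⟩
  · rintro _ ⟨_, ⟨μ, hμ, hab, rfl⟩, rfl⟩
    exact ⟨ρ + μ, ⟨by simp [hρ.1, hμ.1], hρ.2.add_antitone hμ.2⟩, by simp [hab],
      (hibiMonomial_add ρ μ).symm⟩

end IsChainCollapse

end ChainCollapse

section IntervalRank

variable {Q : Type*} [PartialOrder Q] {y : Q} {r : Q → ℕ}

theorem length_le_of_strictAnti (hr : StrictAnti r) {l : ℕ} {c : Fin (l + 1) → Q}
    (hc : StrictMono c) : l ≤ r (c 0) := by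
  let value (i : Fin (l + 1)) : Fin (r (c 0) + 1) :=
    ⟨r (c i), Nat.lt_succ_of_le (hr.antitone (hc.monotone i.zero_le))⟩
  have value_injective : Function.Injective value := fun _ _ h =>
    (hr.comp_strictMono hc).injective (congrArg Fin.val h)
  simpa using Fintype.card_le_of_injective value value_injective

theorem exists_ltSeries_of_forall_exists_lt (hy : r y = 0)
    (hstep : ∀ x ≠ y, ∃ x', x < x' ∧ r x = r x' + 1) (x : Q) :
    ∃ p : LTSeries Q, p.length = r x ∧ p.head = x ∧ p.last = y := by
  induction hl : r x generalizing x with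
  | zero =>
    obtain rfl : x = y := by
      by_contra hne
      obtain ⟨x', -, h⟩ := hstep x hne
      omega
    exact ⟨.singleton _ x, by simp⟩
  | succ l ih =>
    obtain ⟨x', hlt, h⟩ := hstep x (by rintro rfl; omega)
    obtain ⟨p, hp, rfl, rfl⟩ := ih x' (by omega)
    exact ⟨p.cons x hlt, by simp [hp]⟩

theorem intervalRank_eq_of_strictAnti (hr : StrictAnti r) (hy : r y = 0)
    (hstep : ∀ x ≠ y, ∃ x', x < x' ∧ r x = r x' + 1) (x : Q) : intervalRank x y = r x := by
  refine IsGreatest.csSup_eq ⟨?_, ?_⟩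
  · obtain ⟨p, hp, hhead, hlast⟩ := exists_ltSeries_of_forall_exists_lt hy hstep x
    rw [← hp]
    exact ⟨p, p.strictMono, hhead, hlast⟩
  · rintro l ⟨c, hc, rfl, -⟩
    exact length_le_of_strictAnti hr hc

end IntervalRank

section Covers

variable {Q : Type*} [PartialOrder Q] [Finite Q] {α : Type*} [Preorder α] {f : Q → α}

theorem strictAnti_of_forall_covBy (hf : ∀ x y, x ⋖ y → f y < f x) : StrictAnti f := by
  classical
  have := Fintype.ofFinite Q
  let := Fintype.toLocallyFiniteOrder (α := Q)
  exact (strictAnti_iff_forall_covBy f).2 hf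

theorem monotone_of_forall_covBy (hf : ∀ x y, x ⋖ y → f x ≤ f y) : Monotone f := by
  classical
  have := Fintype.ofFinite Q
  let := Fintype.toLocallyFiniteOrder (α := Q)
  exact (monotone_iff_forall_covBy f).2 hf

end Covers

/-- The elements `z`, `z'`, `w`, `w'` enumerate a poset of type (b), whose extra covering relations
from the `z`-chain to the `z'`-chain are listed by `ι`. -/
structure IsTypeB {Q : Type*} [PartialOrder Q] {m n n' p : ℕ} (hm : 3 ≤ m) (z z' : Fin m → Q)
    (w : Fin (n + 1) → Q) (w' : Fin (n' + 1) → Q) (ι : Fin p → ℕ) : Prop where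
  bijective : Function.Bijective
    (Sum.elim (Sum.elim z z') (Sum.elim w w') :
      (Fin m ⊕ Fin m) ⊕ (Fin (n + 1) ⊕ Fin (n' + 1)) → Q)
  covBy_iff (x y : Q) : x ⋖ y ↔ TypeBCovers m n n' p hm z z' w w' ι x y

namespace IsTypeB

variable {Q : Type*} [PartialOrder Q] {m n n' p : ℕ} {hm : 3 ≤ m} {z z' : Fin m → Q}
  {w : Fin (n + 1) → Q} {w' : Fin (n' + 1) → Q} {ι : Fin p → ℕ}

section Index

theorem finite (H : IsTypeB hm z z' w w' ι) : Finite Q :=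
  .of_surjective _ H.bijective.2

theorem card_ne_top [Fintype Q] [DecidableEq Q] (H : IsTypeB hm z z' w w' ι) :
    Fintype.card {q // q ≠ w' (Fin.last n')} = 2 * m + n + n' + 1 := by
  have card_Q := Fintype.card_of_bijective H.bijective
  simp only [Fintype.card_sum, Fintype.card_fin] at card_Q
  rw [Fintype.card_subtype_compl, Fintype.card_subtype_eq]
  omega

@[elab_as_elim]
theorem induction (H : IsTypeB hm z z' w w' ι) {motive : Q → Prop} (z : ∀ i, motive (z i))
    (z' : ∀ i, motive (z' i)) (w : ∀ i, motive (w i)) (w' : ∀ i, motive (w' i)) (x : Q) :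
    motive x := by
  obtain ⟨((i | i) | (i | i)), rfl⟩ := H.bijective.2 x
  exacts [z i, z' i, w i, w' i]

/-- The inverse of the enumeration of a poset of type (b). -/
noncomputable def index (H : IsTypeB hm z z' w w' ι) :
    Q ≃ (Fin m ⊕ Fin m) ⊕ (Fin (n + 1) ⊕ Fin (n' + 1)) :=
  (Equiv.ofBijective _ H.bijective).symm

variable (H : IsTypeB hm z z' w w' ι)

@[simp]
theorem index_z (i : Fin m) : H.index (z i) = .inl (.inl i) :=
  H.index.apply_symm_apply (.inl (.inl i))

@[simp]
theorem index_z' (i : Fin m) : H.index (z' i) = .inl (.inr i) :=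
  H.index.apply_symm_apply (.inl (.inr i))

@[simp]
theorem index_w (i : Fin (n + 1)) : H.index (w i) = .inr (.inl i) :=
  H.index.apply_symm_apply (.inr (.inl i))

@[simp]
theorem index_w' (i : Fin (n' + 1)) : H.index (w' i) = .inr (.inr i) :=
  H.index.apply_symm_apply (.inr (.inr i))

end Index

section CoveringRelations

theorem w_covBy_w (H : IsTypeB hm z z' w w' ι) {i : ℕ} (hi : i < n) :
    w ⟨i, by omega⟩ ⋖ w ⟨i + 1, by omega⟩ :=
  (H.covBy_iff _ _).2 <| .inl ⟨⟨i, hi⟩, rfl, rfl⟩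

theorem w'_covBy_w' (H : IsTypeB hm z z' w w' ι) {i : ℕ} (hi : i < n') :
    w' ⟨i, by omega⟩ ⋖ w' ⟨i + 1, by omega⟩ :=
  (H.covBy_iff _ _).2 <| .inr <| .inl ⟨⟨i, hi⟩, rfl, rfl⟩

theorem w_covBy_z (H : IsTypeB hm z z' w w' ι) : w (Fin.last n) ⋖ z ⟨0, by omega⟩ :=
  (H.covBy_iff _ _).2 <| .inr <| .inr <| .inl ⟨rfl, rfl⟩

theorem z_covBy_z (H : IsTypeB hm z z' w w' ι) {i : ℕ} (hi : i + 1 < m) :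
    z ⟨i, by omega⟩ ⋖ z ⟨i + 1, hi⟩ :=
  (H.covBy_iff _ _).2 <| .inr <| .inr <| .inr <| .inr <| .inl ⟨i, hi, rfl, rfl⟩

theorem z'_covBy_z' (H : IsTypeB hm z z' w w' ι) {i : ℕ} (hi : i + 1 < m) :
    z' ⟨i, by omega⟩ ⋖ z' ⟨i + 1, hi⟩ :=
  (H.covBy_iff _ _).2 <| .inr <| .inr <| .inr <| .inr <| .inr <| .inl ⟨i, hi, rfl, rfl⟩

theorem z_covBy_w' (H : IsTypeB hm z z' w w' ι) : z ⟨m - 1, by omega⟩ ⋖ w' 0 :=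
  (H.covBy_iff _ _).2 <| .inr <| .inr <| .inr <| .inr <| .inr <| .inr <| .inl ⟨rfl, rfl⟩

theorem z'_covBy_w' (H : IsTypeB hm z z' w w' ι) : z' ⟨m - 1, by omega⟩ ⋖ w' 0 :=
  (H.covBy_iff _ _).2 <| .inr <| .inr <| .inr <| .inr <| .inr <| .inr <| .inr <| .inl ⟨rfl, rfl⟩

theorem z'_zero_le_z' (H : IsTypeB hm z z' w w' ι) (i : Fin m) : z' ⟨0, by omega⟩ ≤ z' i := by
  obtain ⟨i, hi⟩ := i
  induction i with
  | zero => exact le_rfl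
  | succ i ih => exact (ih (by omega)).trans (H.z'_covBy_z' hi).le

theorem z'_zero_le_w' (H : IsTypeB hm z z' w w' ι) (i : Fin (n' + 1)) :
    z' ⟨0, by omega⟩ ≤ w' i := by
  induction i using Fin.induction with
  | zero => exact (H.z'_zero_le_z' _).trans H.z'_covBy_w'.le
  | succ i ih => exact ih.trans (H.w'_covBy_w' i.2).le

/-- Weakening the extra covering relations `z_{i_j} ⋖ z'_{i_j + 1}` to all the pairs
`(z_i, z'_{i + 1})` makes the cases independent of `ι`. -/
theorem covBy_induction (H : IsTypeB hm z z' w w' ι) {motive : Q → Q → Prop}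
    (w_w : ∀ i (hi : i < n), motive (w ⟨i, by omega⟩) (w ⟨i + 1, by omega⟩))
    (w'_w' : ∀ i (hi : i < n'), motive (w' ⟨i, by omega⟩) (w' ⟨i + 1, by omega⟩))
    (w_z : motive (w (Fin.last n)) (z ⟨0, by omega⟩))
    (w_z' : motive (w (Fin.last n)) (z' ⟨0, by omega⟩))
    (z_z : ∀ i (hi : i + 1 < m), motive (z ⟨i, by omega⟩) (z ⟨i + 1, hi⟩))
    (z'_z' : ∀ i (hi : i + 1 < m), motive (z' ⟨i, by omega⟩) (z' ⟨i + 1, hi⟩))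
    (z_w' : motive (z ⟨m - 1, by omega⟩) (w' 0))
    (z'_w' : motive (z' ⟨m - 1, by omega⟩) (w' 0))
    (z'_z : motive (z' ⟨0, by omega⟩) (z ⟨m - 1, by omega⟩))
    (z_z' : ∀ i (hi : i + 1 < m), motive (z ⟨i, by omega⟩) (z' ⟨i + 1, hi⟩))
    (x y : Q) (hxy : x ⋖ y) : motive x y := by
  rcases (H.covBy_iff x y).1 hxy with ⟨i, rfl, rfl⟩ | ⟨i, rfl, rfl⟩ | ⟨rfl, rfl⟩ | ⟨rfl, rfl⟩ |
    ⟨i, hi, rfl, rfl⟩ | ⟨i, hi, rfl, rfl⟩ | ⟨rfl, rfl⟩ | ⟨rfl, rfl⟩ | ⟨rfl, rfl⟩ |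
    ⟨j, a, b, ha, hb, rfl, rfl⟩
  · exact w_w i i.2
  · exact w'_w' i i.2
  · exact w_z
  · exact w_z'
  · exact z_z i hi
  · exact z'_z' i hi
  · exact z_w'
  · exact z'_w'
  · exact z'_z
  · obtain ⟨b, hb'⟩ := b
    obtain rfl : b = a + 1 := hb.trans ha.symm
    exact z_z' a hb'

end CoveringRelations

section Position

/-- The position of an element in the chain
`w₀ < ⋯ < w_n < z₁ < ⋯ < z_m = z'₁ < ⋯ < z'_m < w'₀ < ⋯ < w'_{n'}`. -/
noncomputable def position (H : IsTypeB hm z z' w w' ι) (x : Q) : Fin (2 * m + n + n' + 1) :=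
  match H.index x with
  | .inl (.inl i) => ⟨n + 1 + i, by omega⟩
  | .inl (.inr i) => ⟨n + m + i, by omega⟩
  | .inr (.inl i) => ⟨i, by omega⟩
  | .inr (.inr i) => ⟨2 * m + n + i, by omega⟩

theorem monotone_position (H : IsTypeB hm z z' w w' ι) : Monotone H.position := by
  have := H.finite
  refine monotone_of_forall_covBy (H.covBy_induction ?_ ?_ ?_ ?_ ?_ ?_ ?_ ?_ ?_ ?_) <;> intros <;>
    simp only [position, index_z, index_z', index_w, index_w', Fin.mk_le_mk, Fin.val_last,
      Fin.val_zero] <;>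
    omega

theorem position_eq_iff (H : IsTypeB hm z z' w w' ι) (x y : Q) :
    H.position x = H.position y ↔ x = y ∨ x = z' ⟨0, by omega⟩ ∧ y = z ⟨m - 1, by omega⟩ ∨
      x = z ⟨m - 1, by omega⟩ ∧ y = z' ⟨0, by omega⟩ := by
  simp only [position, ← H.index.injective.eq_iff (a := x), ← H.index.injective.eq_iff (a := y),
    index_z, index_z']
  rcases H.index x with (i | i) | i | i <;> rcases H.index y with (j | j) | j | j <;>
    simp only [Fin.ext_iff, Sum.inl.injEq, Sum.inr.injEq, reduceCtorEq, and_false, false_and,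
      or_false, false_or, iff_false] <;>
    omega

theorem exists_covBy_position_eq (H : IsTypeB hm z z' w w' ι) (i : Fin (2 * m + n + n')) :
    ∃ x y, x ⋖ y ∧ H.position x = i.castSucc ∧ H.position y = i.succ := by
  obtain ⟨i, hi⟩ := i
  suffices ∃ x y, x ⋖ y ∧ (H.position x : ℕ) = i ∧ (H.position y : ℕ) = i + 1 by
    simpa [Fin.ext_iff]
  rcases (by omega : i < n ∨ i = n ∨ n + 1 ≤ i ∧ i < n + m ∨ n + m ≤ i ∧ i + 1 < 2 * m + n ∨
    i + 1 = 2 * m + n ∨ 2 * m + n ≤ i) with h | rfl | ⟨h, h'⟩ | ⟨h, h'⟩ | h | h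
  · exact ⟨_, _, H.w_covBy_w h, by simp [position]⟩
  · exact ⟨_, _, H.w_covBy_z, by simp [position]⟩
  · obtain ⟨i, rfl⟩ := Nat.exists_eq_add_of_le h
    exact ⟨_, _, H.z_covBy_z (i := i) (by omega),
      by simp only [position, index_z, true_and]; omega⟩
  · obtain ⟨i, rfl⟩ := Nat.exists_eq_add_of_le h
    exact ⟨_, _, H.z'_covBy_z' (i := i) (by omega),
      by simp only [position, index_z', true_and]; omega⟩
  · exact ⟨_, _, H.z'_covBy_w', by simp only [position, index_z', index_w', Fin.val_zero]; omega⟩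
  · obtain ⟨i, rfl⟩ := Nat.exists_eq_add_of_le h
    exact ⟨_, _, H.w'_covBy_w' (i := i) (by omega),
      by simp only [position, index_w', true_and]; omega⟩

theorem isChainCollapse_position (H : IsTypeB hm z z' w w' ι) :
    IsChainCollapse H.position (w' (Fin.last n')) (z' ⟨0, by omega⟩) (z ⟨m - 1, by omega⟩) where
  monotone := H.monotone_position
  apply_top := by simp [position, Fin.ext_iff]
  apply_eq_iff := H.position_eq_iff
  exists_covBy := H.exists_covBy_position_eq

theorem not_z'_zero_le_w (H : IsTypeB hm z z' w w' ι) (i : Fin (n + 1)) :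
    ¬ z' ⟨0, by omega⟩ ≤ w i := fun h => by
  have := H.monotone_position h
  simp only [position, index_z', index_w, Fin.mk_le_mk] at this
  omega

theorem eq_of_z'_zero_le_z (H : IsTypeB hm z z' w w' ι) {i : Fin m} (h : z' ⟨0, by omega⟩ ≤ z i) :
    i = ⟨m - 1, by omega⟩ := by
  have := H.monotone_position h
  simp only [position, index_z', index_z, Fin.mk_le_mk] at this
  exact Fin.eq_mk_iff_val_eq.2 (by omega)

end Position

section Rank

/-- The rank of `[x, ∞]`, raised by `s` outside `[z'₁, ∞] ∖ {z_m}`: the rank itself for `s = 0`,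
and `ν_h` for `s = m - 1 - h`. -/
noncomputable def shiftedRank (H : IsTypeB hm z z' w w' ι) (s : ℕ) (x : Q) : ℕ :=
  match H.index x with
  | .inl (.inl i) => n' + m - i + s
  | .inl (.inr i) => n' + m - i
  | .inr (.inl i) => n' + m + n + 1 - i + s
  | .inr (.inr i) => n' - i

theorem strictAnti_shiftedRank (H : IsTypeB hm z z' w w' ι) {s : ℕ} (hs : s ≤ m - 2) :
    StrictAnti (H.shiftedRank s) := by
  have := H.finite
  refine strictAnti_of_forall_covBy (H.covBy_induction ?_ ?_ ?_ ?_ ?_ ?_ ?_ ?_ ?_ ?_) <;> intros <;>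
    simp only [shiftedRank, index_z, index_z', index_w, index_w', Fin.val_last, Fin.val_zero] <;>
    omega

theorem isTPAt_shiftedRank (H : IsTypeB hm z z' w w' ι) {s : ℕ} (hs : s ≤ m - 2) :
    IsTPAt (w' (Fin.last n')) (H.shiftedRank s) :=
  ⟨by simp [shiftedRank], H.strictAnti_shiftedRank hs⟩

theorem shiftedRank_le_of_covBy (H : IsTypeB hm z z' w w' ι) (s : ℕ) (x y : Q) (hxy : x ⋖ y) :
    (H.position y : ℕ) = H.position x + 1 → H.shiftedRank s x ≤ H.shiftedRank s y + 1 := by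
  refine H.covBy_induction (motive := fun x y => (H.position y : ℕ) = H.position x + 1 →
    H.shiftedRank s x ≤ H.shiftedRank s y + 1) ?_ ?_ ?_ ?_ ?_ ?_ ?_ ?_ ?_ ?_ x y hxy <;> intros <;>
    simp only [position, shiftedRank, index_z, index_z', index_w, index_w', Fin.val_last,
      Fin.val_zero] at * <;>
    omega

theorem exists_lt_shiftedRank_zero_eq (H : IsTypeB hm z z' w w' ι) (x : Q)
    (hx : x ≠ w' (Fin.last n')) :
    ∃ y, x < y ∧ H.shiftedRank 0 x = H.shiftedRank 0 y + 1 := by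
  induction x using H.induction with
  | z i =>
    obtain ⟨i, hi⟩ := i
    rcases (by omega : i = m - 1 ∨ i + 1 < m) with rfl | hi'
    · exact ⟨_, H.z_covBy_w'.lt, by simp only [shiftedRank, index_z, index_w', Fin.val_zero]; omega⟩
    · exact ⟨_, (H.z_covBy_z hi').lt, by simp only [shiftedRank, index_z]; omega⟩
  | z' i =>
    obtain ⟨i, hi⟩ := i
    rcases (by omega : i = m - 1 ∨ i + 1 < m) with rfl | hi'
    · exact ⟨_, H.z'_covBy_w'.lt,
        by simp only [shiftedRank, index_z', index_w', Fin.val_zero]; omega⟩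
    · exact ⟨_, (H.z'_covBy_z' hi').lt, by simp only [shiftedRank, index_z']; omega⟩
  | w i =>
    cases i using Fin.lastCases with
    | last =>
      exact ⟨_, H.w_covBy_z.lt, by simp only [shiftedRank, index_w, index_z, Fin.val_last]; omega⟩
    | cast i =>
      exact ⟨_, (H.w_covBy_w i.2).lt, by simp only [shiftedRank, index_w, Fin.val_castSucc]; omega⟩
  | w' i =>
    cases i using Fin.lastCases with
    | last => exact absurd rfl hx
    | cast i =>
      exact ⟨_, (H.w'_covBy_w' i.2).lt,
        by simp only [shiftedRank, index_w', Fin.val_castSucc]; omega⟩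

theorem intervalRank_eq_shiftedRank (H : IsTypeB hm z z' w w' ι) (x : Q) :
    intervalRank x (w' (Fin.last n')) = H.shiftedRank 0 x :=
  intervalRank_eq_of_strictAnti (H.strictAnti_shiftedRank (Nat.zero_le _))
    (H.isTPAt_shiftedRank (Nat.zero_le _)).1 H.exists_lt_shiftedRank_zero_eq x

variable [DecidableEq Q] [DecidableRel ((· ≤ ·) : Q → Q → Prop)]

theorem nuH_eq_shiftedRank (H : IsTypeB hm z z' w w' ι) (h : ℕ) :
    nuH m n' h hm z z' w' = H.shiftedRank (m - 1 - h) := by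
  funext x
  rw [nuH, H.intervalRank_eq_shiftedRank]
  induction x using H.induction with
  | z i => rw [if_neg fun hi => hi.2 (congrArg z (H.eq_of_z'_zero_le_z hi.1))]; simp [shiftedRank]
  | z' i =>
    rw [if_pos ⟨H.z'_zero_le_z' i, fun hi => by simpa using congrArg H.index hi⟩]
    simp [shiftedRank]
  | w i => rw [if_neg fun hi => H.not_z'_zero_le_w i hi.1]; simp [shiftedRank]
  | w' i =>
    rw [if_pos ⟨H.z'_zero_le_w' i, fun hi => by simpa using congrArg H.index hi⟩]
    simp [shiftedRank]

theorem nuH_sub_nuH (H : IsTypeB hm z z' w w' ι) {h : ℕ} (hh : h ≤ m - 1) :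
    (nuH m n' h hm z z' w' (z' ⟨0, by omega⟩) : ℤ) - nuH m n' h hm z z' w' (z ⟨m - 1, by omega⟩) =
      h := by
  simp only [H.nuH_eq_shiftedRank, shiftedRank, index_z, index_z']
  omega

theorem gapSpan_eq_map_mulLeft_nuH [Fintype Q] (k : Type*) [Field k]
    (H : IsTypeB hm z z' w w' ι) {h : ℕ} (h_pos : 1 ≤ h) (h_le : h ≤ m - 1) :
    gapSpan k (w' (Fin.last n')) (z' ⟨0, by omega⟩) (z ⟨m - 1, by omega⟩) h =
      (equalSpan k (w' (Fin.last n')) (z' ⟨0, by omega⟩) (z ⟨m - 1, by omega⟩)).map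
        (LinearMap.mulLeft k (hibiMonomial k (w' (Fin.last n')) (nuH m n' h hm z z' w'))) := by
  rw [← H.nuH_sub_nuH h_le, H.nuH_eq_shiftedRank]
  exact H.isChainCollapse_position.gapSpan_eq_map_mulLeft k (H.isTPAt_shiftedRank (by omega))
    (H.shiftedRank_le_of_covBy _)

end Rank

end IsTypeB

/-- for a poset of type (b), (1) the span `R'` of the monomials `T^ν`
with `ν ∈ \overline{T}(P)` and `ν(z'₁) = ν(z_m)` is a `k`-subalgebra of the Hibi
ring `R` isomorphic to a polynomial ring in `#P − 1` variables, and (2) for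
`1 ≤ h ≤ m − 2` the span of the monomials `T^ν` with `ν ∈ T(P)` and
`ν(z'₁) − ν(z_m) = h` is a free `R'`-module of rank 1 generated by `T^{ν_h}`. -/
theorem typeB_hibi_subalgebra_and_free_components
    {Q : Type*} [Fintype Q] [PartialOrder Q] [DecidableEq Q]
    [DecidableRel ((· ≤ ·) : Q → Q → Prop)]
    {k : Type*} [Field k]
    (m n n' p : ℕ) (hm : 3 ≤ m)
    (z z' : Fin m → Q) (w : Fin (n + 1) → Q) (w' : Fin (n' + 1) → Q)
    (ι : Fin p → ℕ)
    (hι₁ : ∀ j, 1 ≤ ι j) (hι₂ : ∀ j, ι j ≤ m - 1) (hιmono : StrictMono ι)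
    (hbij : Function.Bijective
      (Sum.elim (Sum.elim z z') (Sum.elim w w') :
        (Fin m ⊕ Fin m) ⊕ (Fin (n + 1) ⊕ Fin (n' + 1)) → Q))
    (hcov : ∀ a b : Q, a ⋖ b ↔ TypeBCovers m n n' p hm z z' w w' ι a b)
    (hbot : ∀ q : Q, w 0 ≤ q)
    (htop : ∀ q : Q, q ≤ w' (Fin.last n')) :
    (∃ A : Subalgebra k (MvPolynomial {q : Q // q ≠ w' (Fin.last n')} k),
      Subalgebra.toSubmodule A =
        Submodule.span k
          {f | ∃ ν : Q → ℕ, IsTbarAt (w' (Fin.last n')) ν ∧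
            ν (z' ⟨0, by omega⟩) = ν (z ⟨m - 1, by omega⟩) ∧
            f = hibiMonomial k (w' (Fin.last n')) ν} ∧
      Submodule.span k
          {f | ∃ ν : Q → ℕ, IsTbarAt (w' (Fin.last n')) ν ∧
            ν (z' ⟨0, by omega⟩) = ν (z ⟨m - 1, by omega⟩) ∧
            f = hibiMonomial k (w' (Fin.last n')) ν} ≤
        Submodule.span k
          {f | ∃ ν : Q → ℕ, IsTbarAt (w' (Fin.last n')) ν ∧
            f = hibiMonomial k (w' (Fin.last n')) ν} ∧
      Nonempty (A ≃ₐ[k]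
        MvPolynomial (Fin (Fintype.card {q : Q // q ≠ w' (Fin.last n')} - 1)) k)) ∧
    (∀ h : ℕ, 1 ≤ h → h ≤ m - 2 →
      Submodule.span k
          {f | ∃ ν : Q → ℕ, IsTPAt (w' (Fin.last n')) ν ∧
            (ν (z' ⟨0, by omega⟩) : ℤ) - (ν (z ⟨m - 1, by omega⟩) : ℤ) = h ∧
            f = hibiMonomial k (w' (Fin.last n')) ν} =
        (Submodule.span k
          {f | ∃ ν : Q → ℕ, IsTbarAt (w' (Fin.last n')) ν ∧
            ν (z' ⟨0, by omega⟩) = ν (z ⟨m - 1, by omega⟩) ∧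
            f = hibiMonomial k (w' (Fin.last n')) ν}).map
          (LinearMap.mulLeft k
            (hibiMonomial k (w' (Fin.last n')) (nuH m n' h hm z z' w'))) ∧
      ∀ f ∈ Submodule.span k
          {f | ∃ ν : Q → ℕ, IsTbarAt (w' (Fin.last n')) ν ∧
            ν (z' ⟨0, by omega⟩) = ν (z ⟨m - 1, by omega⟩) ∧
            f = hibiMonomial k (w' (Fin.last n')) ν},
        hibiMonomial k (w' (Fin.last n')) (nuH m n' h hm z z' w') * f = 0 → f = 0) := by
  have H : IsTypeB hm z z' w w' ι := ⟨hbij, hcov⟩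
  refine ⟨?_, fun h h_pos h_le => ⟨?_, fun f _ hf => ?_⟩⟩
  · obtain ⟨A, hA, hiso⟩ := H.isChainCollapse_position.exists_subalgebra_equalSpan k
    rw [H.card_ne_top]
    exact ⟨A, hA, Submodule.span_mono fun _ ⟨ν, hν, _, hf⟩ => ⟨ν, hν, hf⟩, hiso⟩
  · exact H.gapSpan_eq_map_mulLeft_nuH k h_pos (by omega)
  · exact (mul_eq_zero.1 hf).resolve_left (hibiMonomial_ne_zero _)
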